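/- Let G be a finite group, p a prime, and H ≤ G a subgroup. The following are equivalent: (1) O^p(H) = O^p(G); (2) H contains O^p(G); (3) there exists a p-subnormal tower from H to G, i.e. a chain of subgroups H = H_r ⊴ H_{r-1} ⊴ ⋯ ⊴ H_1 ⊴ H_0 = G in which each H_{i+1} is a normal subgroup of H_i of index p. -/

import Mathlib

/-- `pResidual p G` is `O^p(G)`: the intersection of all normal subgroups of `G`
whose index is a power of `p`. -/
def pResidual (p : ℕ) (G : Type*) [Group G] : Subgroup G :=
  ⨅ N ∈ {N : Subgroup G | N.Normal ∧ ∃ k : ℕ, N.index = p ^ k}, N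

theorem pResidual_le {p : ℕ} {G : Type*} [Group G] {N : Subgroup G} (hN : N.Normal)
    (h : ∃ k : ℕ, N.index = p ^ k) : pResidual p G ≤ N :=
  iInf₂_le (f := fun (N : Subgroup G) (_ : N ∈ {N : Subgroup G | N.Normal ∧
    ∃ k : ℕ, N.index = p ^ k}) => N) N ⟨hN, h⟩

theorem pResidual_spec {p : ℕ} (hp : p.Prime) (G : Type*) [Group G] [Finite G] :
    (pResidual p G).Normal ∧ ∃ k : ℕ, (pResidual p G).index = p ^ k := by
  have hne : ({N : Subgroup G | N.Normal ∧ ∃ k : ℕ, N.index = p ^ k}).Nonempty :=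
    ⟨⊤, inferInstance, 0, by simp⟩
  obtain ⟨N, hN⟩ := (Set.toFinite
    {N : Subgroup G | N.Normal ∧ ∃ k : ℕ, N.index = p ^ k}).exists_minimal hne
  have hNle : N ≤ pResidual p G := by
    refine le_iInf₂ fun M hM => ?_
    obtain ⟨hn, k, hk⟩ := hN.1
    obtain ⟨hm, l, hl⟩ := hM
    have hmem : N ⊓ M ∈ {N : Subgroup G | N.Normal ∧ ∃ k : ℕ, N.index = p ^ k} := by
      refine ⟨inferInstance, ?_⟩
      have h1 := Subgroup.relIndex_mul_index (inf_le_right : N ⊓ M ≤ M)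
      rw [Subgroup.inf_relIndex_right] at h1
      have h2 := Subgroup.relIndex_dvd_index_of_normal N M
      rw [hk] at h2
      obtain ⟨j, -, hj⟩ := (Nat.dvd_prime_pow hp).1 h2
      exact ⟨j + l, by rw [← h1, hj, hl, pow_add]⟩
    exact (hN.2 hmem inf_le_left).trans inf_le_right
  have : pResidual p G = N := le_antisymm (pResidual_le hN.1.1 hN.1.2) hNle
  rw [this]; exact hN.1

theorem pResidual_map_le {p : ℕ} (hp : p.Prime) {A B : Type*} [Group A] [Group B]
    (f : A →* B) : (pResidual p A).map f ≤ pResidual p B := by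
  refine le_iInf₂ fun N hN => ?_
  rw [Subgroup.map_le_iff_le_comap]
  obtain ⟨hn, k, hk⟩ := hN
  refine pResidual_le inferInstance ?_
  rw [Subgroup.index_comap]
  have h2 := Subgroup.relIndex_dvd_index_of_normal N f.range
  rw [hk] at h2
  obtain ⟨j, -, hj⟩ := (Nat.dvd_prime_pow hp).1 h2
  exact ⟨j, hj⟩

theorem pResidual_map_eq {p : ℕ} (hp : p.Prime) {G : Type*} [Group G] [Finite G]
    {H : Subgroup G} (h : pResidual p G ≤ H) :
    (pResidual p ↥H).map H.subtype = pResidual p G := by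
  refine le_antisymm (pResidual_map_le hp _) ?_
  obtain ⟨hn, k, hk⟩ := pResidual_spec hp G
  obtain ⟨-, l, hl⟩ := pResidual_spec hp (pResidual p G)
  have hc : (pResidual p (pResidual p G)).Characteristic :=
    Subgroup.characteristic_iff_le_comap.2 fun φ =>
      Subgroup.map_le_iff_le_comap.1 (pResidual_map_le hp _)
  have h1 : pResidual p G ≤ (pResidual p (pResidual p G)).map (pResidual p G).subtype := by
    refine pResidual_le inferInstance ⟨l + k, ?_⟩
    rw [Subgroup.index_map_subtype, hl, hk, pow_add]
  refine h1.trans ?_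
  have h2 := Subgroup.map_mono (f := H.subtype) (pResidual_map_le hp (Subgroup.inclusion h))
  rw [Subgroup.map_map] at h2
  exact h2

theorem pGroup_step {p : ℕ} (hp : p.Prime) {Q : Type*} [Group Q] [Finite Q] {m : ℕ}
    (hQ : Nat.card Q = p ^ m) (H : Subgroup Q) (hH : H ≠ ⊤) :
    ∃ K : Subgroup Q, H ≤ K ∧ (H.subgroupOf K).Normal ∧ (H.subgroupOf K).index = p := by
  have := Fact.mk hp
  obtain ⟨n, hnm, hn⟩ := (Nat.dvd_prime_pow hp).1 (hQ ▸ H.card_subgroup_dvd_card)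
  have hlt : n < m := by
    rcases hnm.lt_or_eq with h | h
    · exact h
    · exact absurd (H.eq_top_of_card_eq (by rw [hn, hQ, h])) hH
  obtain ⟨K, hK, hle⟩ := Sylow.exists_subgroup_card_pow_succ (p := p) (n := n)
    (by rw [hQ]; exact pow_dvd_pow p hlt) hn
  have hi : (H.subgroupOf K).index = p := by
    have h1 := (H.subgroupOf K).card_mul_index
    rw [Nat.card_congr (Subgroup.subgroupOfEquivOfLe hle).toEquiv, hn, hK, pow_succ] at h1
    exact Nat.eq_of_mul_eq_mul_left (pow_pos hp.pos n) h1
  refine ⟨K, hle, Subgroup.normal_of_index_eq_minFac_card ?_, hi⟩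
  rw [hi, hK, hp.pow_minFac (Nat.succ_ne_zero n)]

theorem group_step {p : ℕ} (hp : p.Prime) {G : Type*} [Group G] [Finite G]
    (H : Subgroup G) (hR : pResidual p G ≤ H) (hH : H ≠ ⊤) :
    ∃ K : Subgroup G, H ≤ K ∧ (H.subgroupOf K).Normal ∧ (H.subgroupOf K).index = p := by
  obtain ⟨hn, k, hk⟩ := pResidual_spec hp G
  set f := QuotientGroup.mk' (pResidual p G) with hf
  have hs : Function.Surjective f := QuotientGroup.mk'_surjective _
  have hcm : (H.map f).comap f = H := by
    rw [Subgroup.comap_map_eq, hf, QuotientGroup.ker_mk', sup_eq_left.2 hR]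
  obtain ⟨K, h1, h2, h3⟩ := pGroup_step hp (Q := G ⧸ pResidual p G) (m := k) hk (H.map f)
    (fun h => hH (by rw [← hcm, h, Subgroup.comap_top]))
  refine ⟨K.comap f, by rw [← hcm]; exact Subgroup.comap_mono h1, ?_, ?_⟩
  · have : H.subgroupOf (K.comap f) = ((H.map f).subgroupOf K).comap (f.subgroupComap K) := by
      conv_lhs => rw [← hcm]
      rfl
    rw [this]; infer_instance
  · change H.relIndex _ = p
    conv_lhs => rw [← hcm]
    rw [Subgroup.relIndex_comap, Subgroup.map_comap_eq_self_of_surjective hs]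
    exact h3

theorem tower_exists {p : ℕ} (hp : p.Prime) {G : Type*} [Group G] [Finite G]
    (H : Subgroup G) (hR : pResidual p G ≤ H) :
    ∃ (r : ℕ) (c : ℕ → Subgroup G), c 0 = H ∧ c r = ⊤ ∧
      ∀ i < r, c i ≤ c (i + 1) ∧ ((c i).subgroupOf (c (i + 1))).Normal ∧
        ((c i).subgroupOf (c (i + 1))).index = p := by
  induction H using WellFoundedGT.induction with
  | ind H ih =>
    by_cases hH : H = ⊤
    · exact ⟨0, fun _ => H, rfl, hH, fun i hi => absurd hi (Nat.not_lt_zero i)⟩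
    obtain ⟨K, h1, h2, h3⟩ := group_step hp H hR hH
    have hlt : H < K := by
      refine lt_of_le_of_ne h1 ?_
      rintro rfl
      rw [Subgroup.subgroupOf_self, Subgroup.index_top] at h3
      exact hp.one_lt.ne h3
    obtain ⟨r, c, hc0, hcr, hc⟩ := ih K hlt (hR.trans h1)
    refine ⟨r + 1, fun i => Nat.casesOn i H c, rfl, hcr, ?_⟩
    rintro (_ | i) hi
    · change H ≤ c 0 ∧ (H.subgroupOf (c 0)).Normal ∧ (H.subgroupOf (c 0)).index = p
      rw [hc0]; exact ⟨h1, h2, h3⟩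
    · exact hc i (Nat.lt_of_succ_lt_succ hi)

/-- For a finite group `G`, a prime `p` and a subgroup `H ≤ G`, the following are
equivalent: (1) `O^p(H) = O^p(G)` (as subgroups of `G`); (2) `H ⊇ O^p(G)`;
(3) there is a `p`-subnormal tower `H = H_r ⊴ H_{r-1} ⊴ ⋯ ⊴ H_0 = G`, i.e. a chain
of subgroups in which each `H_{i+1}` is a normal subgroup of `H_i` of index `p`. -/
theorem pSubnormal_tfae (G : Type*) [Group G] [Fintype G] (p : ℕ) (hp : p.Prime)
    (H : Subgroup G) :
    List.TFAE
      [ (pResidual p ↥H).map H.subtype = pResidual p G,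
        pResidual p G ≤ H,
        ∃ (r : ℕ) (c : ℕ → Subgroup G), c 0 = H ∧ c r = ⊤ ∧
          ∀ i < r, c i ≤ c (i + 1) ∧ ((c i).subgroupOf (c (i + 1))).Normal ∧
            ((c i).subgroupOf (c (i + 1))).index = p ] := by
  tfae_have 1 → 2 := fun h => h ▸ Subgroup.map_subtype_le _
  tfae_have 2 → 1 := fun h => pResidual_map_eq hp h
  tfae_have 2 → 3 := fun h => tower_exists hp H h
  tfae_have 3 → 2 := by
    rintro ⟨r, c, rfl, hr, hc⟩
    refine Nat.decreasingInduction (motive := fun i _ => pResidual p G ≤ c i) ?_ ?_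
      (Nat.zero_le r)
    · intro i hi ih
      obtain ⟨h1, h2, h3⟩ := hc i hi
      rw [← pResidual_map_eq hp ih, Subgroup.map_le_iff_le_comap]
      exact pResidual_le h2 ⟨1, by rw [pow_one]; exact h3⟩
    · rw [hr]; exact le_top
  tfae_finish
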